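/- arXiv:1004.0613 — 3 statements merged into one kernel-verified Lean document; each statement's English description precedes it below -/
import Mathlib

section
/- Let n ≥ 5 be odd and let Q be the quiver of type D̃_n with vertex set {0,1,…,n} and arrows n→n−2, (n−1)→n−2, i→i−1 for 3 ≤ i ≤ n−2, 2→1 and 2→0. Let σ be the permutation of {0,1,n−1,n} exchanging 0 with 1 and n−1 with n. Then there exists an element Y of ℚ(x_0,…,x_n) such that for every extending vertex i ∈ {0, 1, n−1, n} and every j ≥ 0 one has Y·X^i_{j+n−2} = X^{σ(i)}_j + X^{σ(i)}_{j+2(n−2)}; consequently, for every such i and every j ≥ 0 one also has Y²·X^i_{j+2n−4} = 2·X^i_{j+2n−4} + X^i_j + X^i_{j+2(2n−4)}. -/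
/-- Arrow multiplicities of the quiver of type D̃_n on vertices `{0,…,n}` with arrows
`n → n−2`, `(n−1) → n−2`, `i → i−1` for `3 ≤ i ≤ n−2`, `2 → 1` and `2 → 0`. -/
def multDtilde (n : ℕ) (s t : Fin (n+1)) : ℕ :=
  if (s.val = n ∧ t.val = n - 2) ∨ (s.val = n - 1 ∧ t.val = n - 2) ∨
     (3 ≤ s.val ∧ s.val ≤ n - 2 ∧ t.val + 1 = s.val) ∨
     (s.val = 2 ∧ t.val = 1) ∨ (s.val = 2 ∧ t.val = 0) then 1 else 0

section PositiveCone

variable {τ : Type*}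

/-- The fractions that can be written as a quotient of two polynomials taking positive values
when all indeterminates are `1`. -/
def IsPosAtOne (f : FractionRing (MvPolynomial τ ℚ)) : Prop :=
  ∃ a b : MvPolynomial τ ℚ, 0 < MvPolynomial.eval 1 a ∧ 0 < MvPolynomial.eval 1 b ∧
    f * algebraMap _ (FractionRing (MvPolynomial τ ℚ)) b = algebraMap _ _ a

lemma algebraMap_ne_zero_of_eval_pos {a : MvPolynomial τ ℚ} (ha : 0 < MvPolynomial.eval 1 a) :
    algebraMap _ (FractionRing (MvPolynomial τ ℚ)) a ≠ 0 := by
  intro h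
  rw [map_eq_zero_iff _ (IsFractionRing.injective _ _)] at h
  simp [h] at ha

lemma IsPosAtOne.ne_zero {f : FractionRing (MvPolynomial τ ℚ)} (hf : IsPosAtOne f) : f ≠ 0 := by
  obtain ⟨a, b, ha, -, h⟩ := hf
  rintro rfl
  exact algebraMap_ne_zero_of_eval_pos ha (by rw [← h, zero_mul])

lemma IsPosAtOne.algebraMap {a : MvPolynomial τ ℚ} (ha : 0 < MvPolynomial.eval 1 a) :
    IsPosAtOne (algebraMap _ (FractionRing (MvPolynomial τ ℚ)) a) :=
  ⟨a, 1, ha, by simp, by simp⟩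

lemma IsPosAtOne.one : IsPosAtOne (1 : FractionRing (MvPolynomial τ ℚ)) :=
  ⟨1, 1, by simp, by simp, by simp⟩

lemma IsPosAtOne.mul {f g : FractionRing (MvPolynomial τ ℚ)} (hf : IsPosAtOne f)
    (hg : IsPosAtOne g) : IsPosAtOne (f * g) := by
  obtain ⟨a, b, ha, hb, h⟩ := hf
  obtain ⟨a', b', ha', hb', h'⟩ := hg
  refine ⟨a * a', b * b', by simpa using mul_pos ha ha', by simpa using mul_pos hb hb', ?_⟩
  rw [map_mul, map_mul, ← h, ← h']
  ring

lemma IsPosAtOne.add {f g : FractionRing (MvPolynomial τ ℚ)} (hf : IsPosAtOne f)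
    (hg : IsPosAtOne g) : IsPosAtOne (f + g) := by
  obtain ⟨a, b, ha, hb, h⟩ := hf
  obtain ⟨a', b', ha', hb', h'⟩ := hg
  refine ⟨a * b' + a' * b, b * b', ?_, by simpa using mul_pos hb hb', ?_⟩
  · simpa using add_pos (mul_pos ha hb') (mul_pos ha' hb)
  · rw [map_mul, map_add, map_mul, map_mul, ← h, ← h']
    ring

lemma IsPosAtOne.of_mul {f g : FractionRing (MvPolynomial τ ℚ)} (hfg : IsPosAtOne (f * g))
    (hg : IsPosAtOne g) : IsPosAtOne f := by
  have hg0 := hg.ne_zero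
  obtain ⟨a, b, ha, hb, h⟩ := hfg
  obtain ⟨a', b', ha', hb', h'⟩ := hg
  refine ⟨a * b', b * a', by simpa using mul_pos ha hb', by simpa using mul_pos hb ha', ?_⟩
  rw [map_mul, map_mul, ← h, ← h']
  ring

lemma IsPosAtOne.pow {f : FractionRing (MvPolynomial τ ℚ)} (hf : IsPosAtOne f) (k : ℕ) :
    IsPosAtOne (f ^ k) := by
  induction k with
  | zero => simpa using IsPosAtOne.one
  | succ k ih => rw [pow_succ]; exact ih.mul hf

/-- Frieze sequences on an acyclic quiver whose arrows decrease the vertex number are positive. -/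
lemma isPosAtOne_frieze {N : ℕ} (μ : Fin N → Fin N → ℕ) (hμ : ∀ s t, μ s t ≠ 0 → t < s)
    (X : Fin N → ℕ → FractionRing (MvPolynomial (Fin N) ℚ))
    (hX0 : ∀ v, X v 0 = algebraMap (MvPolynomial (Fin N) ℚ)
      (FractionRing (MvPolynomial (Fin N) ℚ)) (MvPolynomial.X v))
    (hXrec : ∀ v (j : ℕ), X v (j+1) * X v j =
      1 + (∏ s : Fin N, X s (j+1) ^ μ s v) * (∏ d : Fin N, X d j ^ μ v d))
    (j : ℕ) (v : Fin N) : IsPosAtOne (X v j) := by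
  induction j generalizing v with
  | zero =>
    rw [hX0]
    exact IsPosAtOne.algebraMap (by simp)
  | succ j ih =>
    induction v using WellFoundedGT.induction with
    | ind v ihv =>
      refine IsPosAtOne.of_mul ?_ (ih v)
      rw [hXrec]
      refine IsPosAtOne.one.add (IsPosAtOne.mul ?_ ?_)
      · refine Finset.prod_induction _ _ (fun _ _ => IsPosAtOne.mul) IsPosAtOne.one fun s _ => ?_
        by_cases h : μ s v = 0
        · rw [h, pow_zero]
          exact IsPosAtOne.one
        · exact (ihv s (hμ s v h)).pow _
      · exact Finset.prod_induction _ _ (fun _ _ => IsPosAtOne.mul) IsPosAtOne.one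
          fun d _ => (ih d).pow _

end PositiveCone

section LinearRecurrence

variable {K : Type*} [CommRing K]

/-- The transfer matrix of a second order recurrence has determinant one. -/
lemma exists_transfer (c : ℕ → K) (m : ℕ) :
    ∃ p q r s : K, p * s - q * r = 1 ∧
      ∀ v : ℕ → K, (∀ x < m, v (x + 2) + v x = c x * v (x + 1)) →
        v m = p * v 0 + q * v 1 ∧ v (m + 1) = r * v 0 + s * v 1 := by
  induction m with
  | zero => exact ⟨1, 0, 0, 1, by ring, fun v _ => by simp⟩
  | succ m ih =>
    obtain ⟨p, q, r, s, hdet, h⟩ := ih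
    refine ⟨r, s, c m * r - p, c m * s - q, by linear_combination hdet, fun v hv => ?_⟩
    obtain ⟨h1, h2⟩ := h v fun x hx => hv x (by omega)
    exact ⟨h2, by linear_combination hv m (by omega) + c m * h2 - h1⟩

/-- Solutions of a second order recurrence with `m`-periodic coefficients satisfy a common
constant coefficient relation, by the Cayley–Hamilton theorem for the monodromy. -/
lemma exists_trace (c : ℕ → K) (m : ℕ) (hc : ∀ x, c (x + m) = c x) :
    ∃ Y : K, ∀ v : ℕ → K, (∀ x, v (x + 2) + v x = c x * v (x + 1)) →
      ∀ j, Y * v (j + m) = v j + v (j + 2 * m) := by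
  obtain ⟨p, q, r, s, hdet, h⟩ := exists_transfer c m
  refine ⟨p + s, fun v hv => ?_⟩
  obtain ⟨h1, h2⟩ := h v fun x _ => hv x
  obtain ⟨h3, h4⟩ := h (fun x => v (x + m)) fun x _ => by
    have := hv (x + m)
    rw [hc] at this
    convert this using 3 <;> ring_nf
  have e1 : m + m = 2 * m := by ring
  have e2 : m + 1 + m = 1 + 2 * m := by ring
  simp only [zero_add, e1, e2, add_comm 1 m] at h3 h4
  suffices H : ∀ j, (p + s) * v (j + m) = v j + v (j + 2 * m) ∧
      (p + s) * v (j + 1 + m) = v (j + 1) + v (j + 1 + 2 * m) from fun j => (H j).1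
  intro j
  induction j with
  | zero =>
    simp only [zero_add, add_comm 1 m]
    constructor
    · rw [h3]
      linear_combination s * h1 - q * h2 + v 0 * hdet
    · rw [h4]
      linear_combination p * h2 - r * h1 + v 1 * hdet
  | succ j ih =>
    refine ⟨ih.2, ?_⟩
    have a0 := hv j
    have a1 := hv (j + m)
    have a2 := hv (j + 2 * m)
    have hc2 : c (j + 2 * m) = c j := by rw [two_mul, ← add_assoc, hc, hc]
    rw [hc] at a1
    rw [hc2] at a2
    rw [show j + 1 + 1 + m = j + m + 2 by ring, show j + 1 + 1 + 2 * m = j + 2 * m + 2 by ring]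
    rw [show j + 1 + m = j + m + 1 by ring, show j + 1 + 2 * m = j + 2 * m + 1 by ring] at ih
    linear_combination (p + s) * a1 - a0 - a2 + c j * ih.2 - ih.1

/-- A version of the recurrence for two sequences interchanged at each step. -/
lemma trace_relation_of_swap {c P Q : ℕ → K} {m : ℕ} (hm : Odd m) {Y : K}
    (hY : ∀ v : ℕ → K, (∀ x, v (x + 2) + v x = c x * v (x + 1)) →
      ∀ j, Y * v (j + m) = v j + v (j + 2 * m))
    (hP : ∀ x, P (x + 2) + P x = c x * Q (x + 1))
    (hQ : ∀ x, Q (x + 2) + Q x = c x * P (x + 1)) (j : ℕ) :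
    Y * P (j + m) = Q j + Q (j + 2 * m) := by
  have key := hY (fun k => if Even (k + j) then Q k else P k) (fun x => by
    by_cases h : Even (x + j)
    · have h1 : ¬ Even (x + 1 + j) := by grind
      have h2 : Even (x + 2 + j) := by grind
      simpa only [h, h1, h2, if_true, if_false] using hQ x
    · have h1 : Even (x + 1 + j) := by grind
      have h2 : ¬ Even (x + 2 + j) := by grind
      simpa only [h, h1, h2, if_true, if_false] using hP x) j
  have h0 : Even (j + j) := ⟨j, rfl⟩
  have h1 : ¬ Even (j + m + j) := by grind
  have h2 : Even (j + 2 * m + j) := by grind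
  simpa only [h0, h1, h2, if_true, if_false] using key

end LinearRecurrence

section Tiling

variable {K : Type*} [Field K]

/-- In a strip of an `SL₂`-tiling, the coefficient of the recurrence along one direction is the
same in all rows. -/
lemma tiling_coeff_fixed (R : ℕ → ℕ → K) (N : ℕ)
    (hne : ∀ i b, i < N → R (i + 1) b ≠ 0)
    (hR : ∀ i j, i < N → R (i + 1) (j + 1) * R (i + 1) j = 1 + R (i + 2) (j + 1) * R i j)
    (b i : ℕ) (hi : i < N) :
    (R i b + R (i + 2) (b + 2)) / R (i + 1) (b + 1) =
      (R 0 b + R 2 (b + 2)) / R 1 (b + 1) := by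
  induction i with
  | zero => rfl
  | succ i ih =>
    rw [← ih (by omega), div_eq_div_iff (hne _ _ hi) (hne _ _ (by omega))]
    linear_combination hR i b (by omega) - hR (i + 1) (b + 1) hi

/-- In a strip of an `SL₂`-tiling, the coefficient of the recurrence along the other direction is
the same along diagonals. -/
lemma tiling_coeff_diag (R : ℕ → ℕ → K) (N : ℕ)
    (hne : ∀ i b, i < N → R (i + 1) b ≠ 0)
    (hR : ∀ i j, i < N → R (i + 1) (j + 1) * R (i + 1) j = 1 + R (i + 2) (j + 1) * R i j)
    (b i : ℕ) (hi : i < N) :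
    (R i (b + i) + R (i + 2) (b + i)) / R (i + 1) (b + i) = (R 0 b + R 2 b) / R 1 b := by
  induction i with
  | zero => rfl
  | succ i ih =>
    rw [← ih (by omega), ← add_assoc, div_eq_div_iff (hne _ _ hi) (hne _ _ (by omega))]
    linear_combination hR i (b + i) (by omega) - hR (i + 1) (b + i) hi

/-- The constant coefficient relations for frieze sequences of type `D̃`, with `m + 3` vertices. -/
lemma exists_trace_dtilde (m : ℕ) (hm : 3 ≤ m) (hodd : Odd m) (Z : ℕ → ℕ → K)
    (hne : ∀ i j, Z i j ≠ 0)
    (h0 : ∀ j, Z 0 (j + 1) * Z 0 j = 1 + Z 2 (j + 1))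
    (h1 : ∀ j, Z 1 (j + 1) * Z 1 j = 1 + Z 2 (j + 1))
    (h2 : ∀ j, Z 2 (j + 1) * Z 2 j = 1 + Z 3 (j + 1) * (Z 0 j * Z 1 j))
    (hmid : ∀ i j, 3 ≤ i → i < m → Z i (j + 1) * Z i j = 1 + Z (i + 1) (j + 1) * Z (i - 1) j)
    (hm0 : ∀ j, Z m (j + 1) * Z m j = 1 + Z (m + 1) (j + 1) * Z (m + 2) (j + 1) * Z (m - 1) j)
    (hm1 : ∀ j, Z (m + 1) (j + 1) * Z (m + 1) j = 1 + Z m j)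
    (hm2 : ∀ j, Z (m + 2) (j + 1) * Z (m + 2) j = 1 + Z m j) :
    ∃ Y : K, ∀ j,
      Y * Z 0 (j + m) = Z 1 j + Z 1 (j + 2 * m) ∧
      Y * Z 1 (j + m) = Z 0 j + Z 0 (j + 2 * m) ∧
      Y * Z (m + 1) (j + m) = Z (m + 2) j + Z (m + 2) (j + 2 * m) ∧
      Y * Z (m + 2) (j + m) = Z (m + 1) j + Z (m + 1) (j + 2 * m) := by
  let R : ℕ → ℕ → K := fun i b =>
    if i = 0 then Z 2 (b + 1) + 2
    else if i = 1 then Z 0 b * Z 1 b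
    else if i ≤ m then Z i b
    else if i = m + 1 then Z (m + 1) b * Z (m + 2) b
    else Z m (b - 1) + 2
  have R0 (b) : R 0 b = Z 2 (b + 1) + 2 := by simp [R]
  have R1 (b) : R 1 b = Z 0 b * Z 1 b := by simp [R]
  have Rmid (i b) (hi : 2 ≤ i) (hi' : i ≤ m) : R i b = Z i b := by
    simp [R, show i ≠ 0 by omega, show i ≠ 1 by omega, hi']
  have Rm1 (b) : R (m + 1) b = Z (m + 1) b * Z (m + 2) b := by
    simp [R, show m ≠ 0 by omega]
  have Rm2 (b) : R (m + 2) b = Z m (b - 1) + 2 := by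
    simp [R]
  have Rne : ∀ i b, i < m + 1 → R (i + 1) b ≠ 0 := by
    intro i b hi
    obtain rfl | h := Nat.eq_zero_or_pos i
    · rw [R1]; exact mul_ne_zero (hne _ _) (hne _ _)
    obtain rfl | h' : i = m ∨ i < m := by omega
    · rw [Rm1]; exact mul_ne_zero (hne _ _) (hne _ _)
    · rw [Rmid _ _ (by omega) (by omega)]; exact hne _ _
  have hR : ∀ i j, i < m + 1 →
      R (i + 1) (j + 1) * R (i + 1) j = 1 + R (i + 2) (j + 1) * R i j := by
    intro i j hi
    obtain rfl | rfl | rfl | rfl | ⟨h, h'⟩ :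
      i = 0 ∨ i = 1 ∨ i = m ∨ m = i + 1 ∨ (2 ≤ i ∧ i + 1 < m) := by omega
    · simp only [zero_add]
      rw [R0, R1, R1, Rmid 2 _ le_rfl (by omega)]
      linear_combination Z 1 (j + 1) * Z 1 j * h0 j + (1 + Z 2 (j + 1)) * h1 j
    · rw [R1, Rmid 2 _ le_rfl (by omega), Rmid 2 _ le_rfl (by omega), Rmid 3 _ (by omega) hm]
      exact h2 j
    · rw [Rm1, Rm1, Rm2, Rmid _ _ (by omega) le_rfl, Nat.add_sub_cancel]
      linear_combination Z (i + 2) (j + 1) * Z (i + 2) j * hm1 j + (1 + Z i j) * hm2 j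
    · rw [show i + 2 = i + 1 + 1 from rfl, Rm1, Rmid _ _ (by omega) le_rfl,
        Rmid _ _ (by omega) le_rfl, Rmid _ _ (by omega) (by omega)]
      simpa using hm0 j
    · rw [Rmid _ _ (by omega) (by omega), Rmid _ _ (by omega) (by omega),
        Rmid _ _ (by omega) (by omega), Rmid _ _ (by omega) (by omega)]
      simpa using hmid (i + 1) j (by omega) h'
  have fixed := tiling_coeff_fixed R (m + 1) Rne hR
  have diag := tiling_coeff_diag R (m + 1) Rne hR
  let c : ℕ → K := fun x => (R 0 (x + 1) + R 2 (x + 1)) / R 1 (x + 1)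
  have hc0 (x) : c x * (Z 0 (x + 1) * Z 1 (x + 1)) = Z 2 (x + 2) + 2 + Z 2 (x + 1) := by
    simp only [c, ← R1]
    rw [div_mul_cancel₀ _ (Rne 0 _ (by omega)), R0, Rmid 2 _ le_rfl (by omega)]
  have hc1 (x) : c x = (R m x + R (m + 2) (x + 2)) / R (m + 1) (x + 1) := by
    rw [fixed x m (by omega)]
    simp only [c]
    rw [R0, R0, Rmid 2 _ le_rfl (by omega), Rmid 2 _ le_rfl (by omega)]
    ring
  have hc2 (x) : c x * (Z (m + 1) (x + 1) * Z (m + 2) (x + 1)) = Z m x + Z m (x + 1) + 2 := by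
    rw [hc1, ← Rm1, div_mul_cancel₀ _ (Rne m _ (by omega)), Rmid m _ (by omega) le_rfl, Rm2,
      show x + 2 - 1 = x + 1 from rfl]
    ring
  have hper (x) : c (x + m) = c x := by
    have := diag (x + 1) m (by omega)
    rw [hc1]
    simp only [c]
    rw [← this, Rmid m _ (by omega) le_rfl, Rmid m _ (by omega) le_rfl, Rm2, Rm2,
      show x + 1 + m = x + m + 1 by ring, show x + m + 2 - 1 = x + m + 1 from rfl,
      Nat.add_sub_cancel]
    ring
  obtain ⟨Y, hY⟩ := exists_trace c m hper
  have a0 (x) : Z 0 (x + 2) + Z 0 x = c x * Z 1 (x + 1) :=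
    mul_right_cancel₀ (hne 0 (x + 1)) (by linear_combination h0 (x + 1) + h0 x - hc0 x)
  have a1 (x) : Z 1 (x + 2) + Z 1 x = c x * Z 0 (x + 1) :=
    mul_right_cancel₀ (hne 1 (x + 1)) (by linear_combination h1 (x + 1) + h1 x - hc0 x)
  have b1 (x) : Z (m + 1) (x + 2) + Z (m + 1) x = c x * Z (m + 2) (x + 1) :=
    mul_right_cancel₀ (hne (m + 1) (x + 1)) (by linear_combination hm1 (x + 1) + hm1 x - hc2 x)
  have b2 (x) : Z (m + 2) (x + 2) + Z (m + 2) x = c x * Z (m + 1) (x + 1) :=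
    mul_right_cancel₀ (hne (m + 2) (x + 1)) (by linear_combination hm2 (x + 1) + hm2 x - hc2 x)
  exact ⟨Y, fun j => ⟨trace_relation_of_swap hodd hY a0 a1 j,
    trace_relation_of_swap hodd hY a1 a0 j,
    trace_relation_of_swap hodd hY b1 b2 j,
    trace_relation_of_swap hodd hY b2 b1 j⟩⟩

end Tiling

lemma multDtilde_lt {n : ℕ} (hn : 5 ≤ n) (s t : Fin (n + 1)) (h : multDtilde n s t ≠ 0) :
    t < s := by
  rw [Fin.lt_def]
  unfold multDtilde at h
  split_ifs at h <;> omega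

lemma prod_pow_multDtilde_left {M : Type*} [CommMonoid M] {n : ℕ} (f : Fin (n + 1) → M)
    (v : Fin (n + 1)) (S : Finset (Fin (n + 1)))
    (hS : ∀ s, s ∈ S ↔ ((s.val = n ∧ v.val = n - 2) ∨ (s.val = n - 1 ∧ v.val = n - 2) ∨
     (3 ≤ s.val ∧ s.val ≤ n - 2 ∧ v.val + 1 = s.val) ∨
     (s.val = 2 ∧ v.val = 1) ∨ (s.val = 2 ∧ v.val = 0))) :
    ∏ s, f s ^ multDtilde n s v = ∏ s ∈ S, f s := by
  simp only [multDtilde, ← hS, pow_ite, pow_one, pow_zero, Finset.prod_ite_mem, Finset.univ_inter]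

lemma prod_pow_multDtilde_right {M : Type*} [CommMonoid M] {n : ℕ} (f : Fin (n + 1) → M)
    (v : Fin (n + 1)) (S : Finset (Fin (n + 1)))
    (hS : ∀ t, t ∈ S ↔ ((v.val = n ∧ t.val = n - 2) ∨ (v.val = n - 1 ∧ t.val = n - 2) ∨
     (3 ≤ v.val ∧ v.val ≤ n - 2 ∧ t.val + 1 = v.val) ∨
     (v.val = 2 ∧ t.val = 1) ∨ (v.val = 2 ∧ t.val = 0))) :
    ∏ t, f t ^ multDtilde n v t = ∏ t ∈ S, f t := by
  simp only [multDtilde, ← hS, pow_ite, pow_one, pow_zero, Finset.prod_ite_mem, Finset.univ_inter]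

/-- Let `n ≥ 5` be odd and `Q` the above quiver of type D̃_n, and let `σ` be
the permutation of the extending vertices `{0,1,n−1,n}` exchanging `0 ↔ 1` and `n−1 ↔ n`
(below `i` is an extending vertex and `si = σ(i)`). Then there is an element `Y` of
`ℚ(x_0,…,x_n)` such that for every extending vertex `i` and every `j ≥ 0` one has
`Y·X^i_{j+n−2} = X^{σ(i)}_j + X^{σ(i)}_{j+2(n−2)}`, and consequently
`Y²·X^i_{j+2n−4} = 2·X^i_{j+2n−4} + X^i_j + X^i_{j+2(2n−4)}`. -/
theorem stmt_15 (n : ℕ) (hn : 5 ≤ n) (hodd : Odd n)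
    -- the frieze sequences
    (X : Fin (n+1) → ℕ → FractionRing (MvPolynomial (Fin (n+1)) ℚ))
    (hX0 : ∀ v, X v 0 = algebraMap (MvPolynomial (Fin (n+1)) ℚ)
      (FractionRing (MvPolynomial (Fin (n+1)) ℚ)) (MvPolynomial.X v))
    (hXrec : ∀ v (j : ℕ), X v (j+1) * X v j =
      1 + (∏ s : Fin (n+1), X s (j+1) ^ multDtilde n s v) *
          (∏ d : Fin (n+1), X d j ^ multDtilde n v d)) :
    ∃ Y : FractionRing (MvPolynomial (Fin (n+1)) ℚ),
      ∀ i si : Fin (n+1),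
        ((i.val = 0 ∧ si.val = 1) ∨ (i.val = 1 ∧ si.val = 0) ∨
         (i.val = n - 1 ∧ si.val = n) ∨ (i.val = n ∧ si.val = n - 1)) →
        ∀ j : ℕ,
          Y * X i (j + (n - 2)) = X si j + X si (j + 2 * (n - 2)) ∧
          Y ^ 2 * X i (j + (2 * n - 4)) =
            2 * X i (j + (2 * n - 4)) + X i j + X i (j + 2 * (2 * n - 4)) := by
  have hpos := isPosAtOne_frieze (multDtilde n) (multDtilde_lt hn) X hX0 hXrec
  obtain ⟨m, rfl⟩ : ∃ m, n = m + 2 := ⟨n - 2, by omega⟩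
  let e : ℕ → Fin (m + 2 + 1) := Fin.ofNat (m + 2 + 1)
  have he (i : ℕ) (hi : i < m + 3) : (e i).val = i := by
    simpa [e] using Nat.mod_eq_of_lt hi
  have heq (v : Fin (m + 2 + 1)) (i : ℕ) (hi : i < m + 3) : v = e i ↔ v.val = i := by
    rw [Fin.ext_iff, he i hi]
  have hrec (i : ℕ) (S T : Finset (Fin (m + 2 + 1)))
      (hS : ∀ s, s ∈ S ↔ ((s.val = m + 2 ∧ (e i).val = m + 2 - 2) ∨
        (s.val = m + 2 - 1 ∧ (e i).val = m + 2 - 2) ∨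
        (3 ≤ s.val ∧ s.val ≤ m + 2 - 2 ∧ (e i).val + 1 = s.val) ∨
        (s.val = 2 ∧ (e i).val = 1) ∨ (s.val = 2 ∧ (e i).val = 0)))
      (hT : ∀ t, t ∈ T ↔ (((e i).val = m + 2 ∧ t.val = m + 2 - 2) ∨
        ((e i).val = m + 2 - 1 ∧ t.val = m + 2 - 2) ∨
        (3 ≤ (e i).val ∧ (e i).val ≤ m + 2 - 2 ∧ t.val + 1 = (e i).val) ∨
        ((e i).val = 2 ∧ t.val = 1) ∨ ((e i).val = 2 ∧ t.val = 0))) (j : ℕ) :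
      X (e i) (j + 1) * X (e i) j = 1 + (∏ s ∈ S, X s (j + 1)) * ∏ t ∈ T, X t j := by
    rw [hXrec, prod_pow_multDtilde_left _ _ S hS, prod_pow_multDtilde_right _ _ T hT]
  have hinj (i k : ℕ) (hi : i < m + 3) (hk : k < m + 3) (hik : i ≠ k) : e i ≠ e k := by
    rw [Ne, heq _ _ hk, he _ hi]
    exact hik
  obtain ⟨Y, hY⟩ := exists_trace_dtilde m (by omega) (by grind) (fun i j => X (e i) j)
    (fun i j => (hpos j (e i)).ne_zero)
    (fun j => by
      simpa using hrec 0 {e 2} ∅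
        (fun s => by rw [Finset.mem_singleton, heq _ _ (by omega), he _ (by omega)]; omega)
        (fun s => by simp only [Finset.notMem_empty, false_iff]; rw [he _ (by omega)]; omega) j)
    (fun j => by
      simpa using hrec 1 {e 2} ∅
        (fun s => by rw [Finset.mem_singleton, heq _ _ (by omega), he _ (by omega)]; omega)
        (fun s => by simp only [Finset.notMem_empty, false_iff]; rw [he _ (by omega)]; omega) j)
    (fun j => by
      have := hrec 2 {e 3} {e 0, e 1}
        (fun s => by rw [Finset.mem_singleton, heq _ _ (by omega), he _ (by omega)]; omega)
        (fun s => by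
          rw [Finset.mem_insert, Finset.mem_singleton, heq _ _ (by omega), heq _ _ (by omega),
            he _ (by omega)]; omega) j
      rwa [Finset.prod_singleton,
        Finset.prod_pair (hinj 0 1 (by omega) (by omega) (by omega))] at this)
    (fun i j hi hi' => by
      simpa using hrec i {e (i + 1)} {e (i - 1)}
        (fun s => by rw [Finset.mem_singleton, heq _ _ (by omega), he _ (by omega)]; omega)
        (fun s => by rw [Finset.mem_singleton, heq _ _ (by omega), he _ (by omega)]; omega) j)
    (fun j => by
      have := hrec m {e (m + 1), e (m + 2)} {e (m - 1)}
        (fun s => by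
          rw [Finset.mem_insert, Finset.mem_singleton, heq _ _ (by omega), heq _ _ (by omega),
            he _ (by omega)]; omega)
        (fun s => by rw [Finset.mem_singleton, heq _ _ (by omega), he _ (by omega)]; omega) j
      rwa [Finset.prod_singleton,
        Finset.prod_pair (hinj (m + 1) (m + 2) (by omega) (by omega) (by omega))] at this)
    (fun j => by
      simpa using hrec (m + 1) ∅ {e m}
        (fun s => by simp only [Finset.notMem_empty, false_iff]; rw [he _ (by omega)]; omega)
        (fun s => by rw [Finset.mem_singleton, heq _ _ (by omega), he _ (by omega)]; omega) j)
    (fun j => by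
      simpa using hrec (m + 2) ∅ {e m}
        (fun s => by simp only [Finset.notMem_empty, false_iff]; rw [he _ (by omega)]; omega)
        (fun s => by rw [Finset.mem_singleton, heq _ _ (by omega), he _ (by omega)]; omega) j)
  have first : ∀ i si : Fin (m + 2 + 1),
      ((i.val = 0 ∧ si.val = 1) ∨ (i.val = 1 ∧ si.val = 0) ∨
       (i.val = m + 2 - 1 ∧ si.val = m + 2) ∨ (i.val = m + 2 ∧ si.val = m + 2 - 1)) →
      ∀ j, Y * X i (j + m) = X si j + X si (j + 2 * m) := by
    intro i si h j
    obtain ⟨y0, y1, y2, y3⟩ := hY j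
    rcases h with ⟨h, h'⟩ | ⟨h, h'⟩ | ⟨h, h'⟩ | ⟨h, h'⟩ <;>
      rw [(heq i _ (by omega)).2 h, (heq si _ (by omega)).2 h'] <;> assumption
  refine ⟨Y, fun i si h j => ⟨first i si h j, ?_⟩⟩
  have f0 := first i si h (j + m)
  have f1 := first si i (by tauto) j
  have f2 := first si i (by tauto) (j + 2 * m)
  rw [show 2 * (m + 2) - 4 = 2 * m by omega, show j + 2 * (2 * m) = j + 2 * m + 2 * m by ring]
  rw [show j + m + m = j + 2 * m by ring, show j + m + 2 * m = j + 2 * m + m by ring] at f0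
  linear_combination Y * f0 + f1 + f2
end

section
/- Let Q be the quiver of type Ẽ_6 with vertex set {1,…,7} and arrows 1→2, 2→7, 3→4, 4→7, 5→6, 6→7. Then there exists an element Y of ℚ(x_1,…,x_7) such that for every extending vertex i ∈ {1, 3, 5} and every j ≥ 0 one has Y·X^i_{j+6} = X^i_j + X^i_{j+12}. -/
/-- Arrow multiplicities of the quiver of type Ẽ_6 with arrows
`1→2, 2→7, 3→4, 4→7, 5→6, 6→7`; the vertex labelled `k ∈ {1,…,7}` corresponds to the
index `k−1` of `Fin 7`. -/
def multE6 (s t : Fin 7) : ℕ :=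
  if (s = 0 ∧ t = 1) ∨ (s = 1 ∧ t = 6) ∨ (s = 2 ∧ t = 3) ∨ (s = 3 ∧ t = 6) ∨
     (s = 4 ∧ t = 5) ∨ (s = 5 ∧ t = 6) then 1 else 0

section E6Frieze

variable {K : Type*} [Field K]

/-- Nowhere vanishing solutions of the frieze recursion of `Ẽ_6`: the three arms carry the sequences
`(A, P)`, `(B, Q)`, `(C, R)` (extending vertex first) and the central vertex carries `m`. -/
structure IsE6Frieze (A P B Q C R m : ℕ → K) : Prop where
  A_ne : ∀ j, A j ≠ 0
  B_ne : ∀ j, B j ≠ 0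
  C_ne : ∀ j, C j ≠ 0
  P_ne : ∀ j, P j ≠ 0
  Q_ne : ∀ j, Q j ≠ 0
  R_ne : ∀ j, R j ≠ 0
  m_ne : ∀ j, m j ≠ 0
  A_rec : ∀ j, A (j + 1) * A j = 1 + P j
  B_rec : ∀ j, B (j + 1) * B j = 1 + Q j
  C_rec : ∀ j, C (j + 1) * C j = 1 + R j
  P_rec : ∀ j, P (j + 1) * P j = 1 + A (j + 1) * m j
  Q_rec : ∀ j, Q (j + 1) * Q j = 1 + B (j + 1) * m j
  R_rec : ∀ j, R (j + 1) * R j = 1 + C (j + 1) * m j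
  m_rec : ∀ j, m (j + 1) * m j = 1 + P (j + 1) * Q (j + 1) * R (j + 1)

/-- The coefficient of the three-term relation
`A (j + 2) * ε = B (j + 4) + C j` between the extending vertices. -/
def tubeCoeff (A B C : ℕ → K) (j : ℕ) : K := (B (j + 4) + C j) / A (j + 2)

/-- The trace of the product of three consecutive transfer matrices of the three-term relation. -/
def tubeTrace (A B C : ℕ → K) (j : ℕ) : K :=
  tubeCoeff A B C j * tubeCoeff A B C (j + 1) * tubeCoeff A B C (j + 2) -
    (tubeCoeff A B C j + tubeCoeff A B C (j + 1) + tubeCoeff A B C (j + 2))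

namespace IsE6Frieze

variable {A P B Q C R m : ℕ → K}

theorem rotate (h : IsE6Frieze A P B Q C R m) : IsE6Frieze B Q C R A P m :=
  ⟨h.B_ne, h.C_ne, h.A_ne, h.Q_ne, h.R_ne, h.P_ne, h.m_ne, h.B_rec, h.C_rec, h.A_rec,
    h.Q_rec, h.R_rec, h.P_rec, fun j => by rw [h.m_rec]; ring⟩

theorem P_succ_mul_A (h : IsE6Frieze A P B Q C R m) (j : ℕ) :
    P (j + 1) * A j = A (j + 2) + m j := by
  apply mul_left_cancel₀ (h.A_ne (j + 1))
  linear_combination P (j + 1) * h.A_rec j + h.P_rec j - h.A_rec (j + 1)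

theorem P_mul_A_add_two (h : IsE6Frieze A P B Q C R m) (j : ℕ) :
    P j * A (j + 2) = A j + m j := by
  apply mul_left_cancel₀ (h.A_ne (j + 1))
  linear_combination P j * h.A_rec (j + 1) + h.P_rec j - h.A_rec j

theorem A_add_three_mul_m (h : IsE6Frieze A P B Q C R m) (j : ℕ) :
    A (j + 3) * m j = Q (j + 1) * R (j + 1) + P j := by
  apply mul_left_cancel₀ (h.P_ne (j + 1))
  linear_combination m j * h.P_mul_A_add_two (j + 1) - h.P_rec j + h.m_rec j

theorem A_mul_m_succ (h : IsE6Frieze A P B Q C R m) (j : ℕ) :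
    A j * m (j + 1) = Q (j + 1) * R (j + 1) + P (j + 2) := by
  apply mul_left_cancel₀ (h.P_ne (j + 1))
  linear_combination m (j + 1) * h.P_succ_mul_A j - h.P_rec (j + 1) + h.m_rec j

theorem P_relation (h : IsE6Frieze A P B Q C R m) (j : ℕ) :
    P j * P (j + 1) * P (j + 2) - P j - P (j + 2) =
      1 + Q (j + 1) * R (j + 1) * (1 + P (j + 1)) := by
  apply mul_left_cancel₀ (h.P_ne (j + 1))
  linear_combination (P (j + 2) * P (j + 1) - 1) * h.P_rec j +
    A (j + 1) * m j * h.P_rec (j + 1) + m j * m (j + 1) * h.A_rec (j + 1) +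
    (1 + P (j + 1)) * h.m_rec j

theorem exchange (h : IsE6Frieze A P B Q C R m) (j : ℕ) :
    A (j + 2) * (C (j + 5) + A (j + 1)) = B (j + 3) * (B (j + 4) + C j) := by
  apply mul_left_cancel₀ (mul_ne_zero (h.m_ne (j + 1)) (h.m_ne (j + 2)))
  linear_combination m (j + 1) * A (j + 2) * h.rotate.rotate.A_add_three_mul_m (j + 2) +
    m (j + 1) * m (j + 2) * h.A_rec (j + 1) - m (j + 1) * m (j + 2) * h.B_rec (j + 3) -
    m (j + 2) * B (j + 3) * h.rotate.rotate.A_mul_m_succ j -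
    (P (j + 3) * Q (j + 3) + R (j + 2)) * h.P_rec (j + 1) +
    (P (j + 1) * Q (j + 1) + R (j + 2)) * h.Q_rec (j + 2) +
    (P (j + 1) - Q (j + 3)) * h.m_rec (j + 1) +
    Q (j + 3) * h.P_relation (j + 1) - P (j + 1) * h.rotate.P_relation (j + 1)

theorem A_mul_tubeCoeff (h : IsE6Frieze A P B Q C R m) (j : ℕ) :
    A (j + 2) * tubeCoeff A B C j = B (j + 4) + C j :=
  mul_div_cancel₀ _ (h.A_ne _)

theorem tubeCoeff_rotate (h : IsE6Frieze A P B Q C R m) (j : ℕ) :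
    tubeCoeff B C A (j + 1) = tubeCoeff A B C j := by
  rw [tubeCoeff, tubeCoeff, div_eq_div_iff (h.B_ne _) (h.A_ne _)]
  linear_combination h.exchange j

theorem tubeCoeff_add_three (h : IsE6Frieze A P B Q C R m) (j : ℕ) :
    tubeCoeff A B C (j + 3) = tubeCoeff A B C j := by
  rw [h.rotate.rotate.tubeCoeff_rotate (j + 2), h.rotate.tubeCoeff_rotate (j + 1),
    h.tubeCoeff_rotate j]

theorem tubeTrace_eq (h : IsE6Frieze A P B Q C R m) (j : ℕ) :
    tubeTrace A B C j = tubeTrace A B C 0 := by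
  induction j with
  | zero => rfl
  | succ j ih =>
    rw [← ih, tubeTrace, tubeTrace, h.tubeCoeff_add_three j]
    ring

theorem tubeTrace_rotate (h : IsE6Frieze A P B Q C R m) :
    tubeTrace B C A 0 = tubeTrace A B C 0 := by
  rw [← h.rotate.tubeTrace_eq 1, tubeTrace, tubeTrace, h.tubeCoeff_rotate 0,
    h.tubeCoeff_rotate 1, h.tubeCoeff_rotate 2]

theorem linear_relation (h : IsE6Frieze A P B Q C R m) (j : ℕ) :
    tubeTrace A B C 0 * A (j + 6) = A j + A (j + 12) := by
  have hC (n : ℕ) : tubeCoeff C A B (n + 2) = tubeCoeff A B C n := by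
    rw [h.rotate.tubeCoeff_rotate (n + 1), h.tubeCoeff_rotate n]
  have hB : tubeCoeff B C A j = tubeCoeff A B C (j + 2) := by
    rw [← h.rotate.tubeCoeff_add_three j, h.tubeCoeff_rotate]
  have e₁ := h.rotate.A_mul_tubeCoeff j
  have e₂ := h.rotate.rotate.A_mul_tubeCoeff (j + 2)
  have e₃ := h.A_mul_tubeCoeff (j + 4)
  have e₄ := h.rotate.A_mul_tubeCoeff (j + 6)
  have e₅ := h.rotate.rotate.A_mul_tubeCoeff (j + 8)
  rw [hB] at e₁
  rw [hC] at e₂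
  rw [h.tubeCoeff_add_three (j + 1)] at e₃
  rw [h.rotate.tubeCoeff_add_three (j + 3), h.rotate.tubeCoeff_add_three j, hB] at e₄
  rw [hC, h.tubeCoeff_add_three (j + 3), h.tubeCoeff_add_three j] at e₅
  rw [← h.tubeTrace_eq j, tubeTrace]
  set r := tubeCoeff A B C j
  set p := tubeCoeff A B C (j + 1)
  set q := tubeCoeff A B C (j + 2)
  linear_combination (r * q - 1) * e₃ + r * e₄ + e₅ + q * e₂ + e₁

end IsE6Frieze

end E6Frieze

/-- Fractions of polynomials which both take positive values at the point `(1, …, 1)`. -/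
def IsPositiveFraction {σ : Type*} (x : FractionRing (MvPolynomial σ ℚ)) : Prop :=
  ∃ p q : MvPolynomial σ ℚ, 0 < MvPolynomial.eval 1 p ∧ 0 < MvPolynomial.eval 1 q ∧
    x * algebraMap _ _ q = algebraMap _ (FractionRing (MvPolynomial σ ℚ)) p

namespace IsPositiveFraction

variable {σ : Type*} {x y z : FractionRing (MvPolynomial σ ℚ)}

theorem algebraMap_ne_zero {p : MvPolynomial σ ℚ} (hp : 0 < MvPolynomial.eval 1 p) :
    algebraMap _ (FractionRing (MvPolynomial σ ℚ)) p ≠ 0 := by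
  rw [Ne, IsFractionRing.to_map_eq_zero_iff]
  rintro rfl
  simp at hp

theorem ne_zero (hx : IsPositiveFraction x) : x ≠ 0 := by
  obtain ⟨p, q, hp, -, h⟩ := hx
  rintro rfl
  exact algebraMap_ne_zero hp (by rw [← h, zero_mul])

theorem one_add (hx : IsPositiveFraction x) : IsPositiveFraction (1 + x) := by
  obtain ⟨p, q, hp, hq, h⟩ := hx
  refine ⟨q + p, q, ?_, hq, ?_⟩
  · rw [map_add]
    exact add_pos hq hp
  · rw [map_add, ← h]
    ring

theorem mul (hx : IsPositiveFraction x) (hy : IsPositiveFraction y) :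
    IsPositiveFraction (x * y) := by
  obtain ⟨p, q, hp, hq, h⟩ := hx
  obtain ⟨p', q', hp', hq', h'⟩ := hy
  refine ⟨p * p', q * q', ?_, ?_, ?_⟩
  · rw [map_mul]
    exact mul_pos hp hp'
  · rw [map_mul]
    exact mul_pos hq hq'
  · rw [map_mul, map_mul, ← h, ← h']
    ring

theorem of_mul_eq (hy : IsPositiveFraction y) (hz : IsPositiveFraction z) (h : x * y = z) :
    IsPositiveFraction x := by
  obtain ⟨p, q, hp, hq, hpq⟩ := hy
  obtain ⟨p', q', hp', hq', hpq'⟩ := hz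
  refine ⟨p' * q, p * q', ?_, ?_, ?_⟩
  · rw [map_mul]
    exact mul_pos hp' hq
  · rw [map_mul]
    exact mul_pos hp hq'
  · rw [map_mul, map_mul, ← hpq, ← hpq', ← h]
    ring

theorem algebraMap_X (v : σ) : IsPositiveFraction
    (algebraMap (MvPolynomial σ ℚ) (FractionRing (MvPolynomial σ ℚ)) (MvPolynomial.X v)) :=
  ⟨MvPolynomial.X v, 1, by simp, by simp, by simp⟩

end IsPositiveFraction

/-- for the above quiver of type Ẽ_6, there is an element `Y` of
`ℚ(x_1,…,x_7)` such that for every extending vertex `i ∈ {1,3,5}` (indices `{0,2,4}`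
of `Fin 7`) and every `j ≥ 0` one has `Y·X^i_{j+6} = X^i_j + X^i_{j+12}`. -/
theorem stmt_16
    (X : Fin 7 → ℕ → FractionRing (MvPolynomial (Fin 7) ℚ))
    (hX0 : ∀ v, X v 0 = algebraMap (MvPolynomial (Fin 7) ℚ)
      (FractionRing (MvPolynomial (Fin 7) ℚ)) (MvPolynomial.X v))
    (hXrec : ∀ v (j : ℕ), X v (j+1) * X v j =
      1 + (∏ s : Fin 7, X s (j+1) ^ multE6 s v) * (∏ d : Fin 7, X d j ^ multE6 v d)) :
    ∃ Y : FractionRing (MvPolynomial (Fin 7) ℚ),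
      ∀ i : Fin 7, (i = 0 ∨ i = 2 ∨ i = 4) →
        ∀ j : ℕ, Y * X i (j + 6) = X i j + X i (j + 12) := by
  have r0 (j : ℕ) : X 0 (j + 1) * X 0 j = 1 + X 1 j := by
    simpa [Fin.prod_univ_seven, multE6] using hXrec 0 j
  have r1 (j : ℕ) : X 1 (j + 1) * X 1 j = 1 + X 0 (j + 1) * X 6 j := by
    simpa [Fin.prod_univ_seven, multE6] using hXrec 1 j
  have r2 (j : ℕ) : X 2 (j + 1) * X 2 j = 1 + X 3 j := by
    simpa [Fin.prod_univ_seven, multE6] using hXrec 2 j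
  have r3 (j : ℕ) : X 3 (j + 1) * X 3 j = 1 + X 2 (j + 1) * X 6 j := by
    simpa [Fin.prod_univ_seven, multE6] using hXrec 3 j
  have r4 (j : ℕ) : X 4 (j + 1) * X 4 j = 1 + X 5 j := by
    simpa [Fin.prod_univ_seven, multE6] using hXrec 4 j
  have r5 (j : ℕ) : X 5 (j + 1) * X 5 j = 1 + X 4 (j + 1) * X 6 j := by
    simpa [Fin.prod_univ_seven, multE6] using hXrec 5 j
  have r6 (j : ℕ) : X 6 (j + 1) * X 6 j = 1 + X 1 (j + 1) * X 3 (j + 1) * X 5 (j + 1) := by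
    simpa [Fin.prod_univ_seven, multE6] using hXrec 6 j
  have pos (j : ℕ) : ∀ v, IsPositiveFraction (X v j) := by
    induction j with
    | zero => exact fun v => hX0 v ▸ .algebraMap_X v
    | succ j ih =>
      have p0 := (ih 0).of_mul_eq (ih 1).one_add (r0 j)
      have p2 := (ih 2).of_mul_eq (ih 3).one_add (r2 j)
      have p4 := (ih 4).of_mul_eq (ih 5).one_add (r4 j)
      have p1 := (ih 1).of_mul_eq (p0.mul (ih 6)).one_add (r1 j)
      have p3 := (ih 3).of_mul_eq (p2.mul (ih 6)).one_add (r3 j)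
      have p5 := (ih 5).of_mul_eq (p4.mul (ih 6)).one_add (r5 j)
      have p6 := (ih 6).of_mul_eq ((p1.mul p3).mul p5).one_add (r6 j)
      intro v
      fin_cases v
      exacts [p0, p1, p2, p3, p4, p5, p6]
  have ne (v : Fin 7) (j : ℕ) : X v j ≠ 0 := (pos j v).ne_zero
  have h : IsE6Frieze (X 0) (X 1) (X 2) (X 3) (X 4) (X 5) (X 6) :=
    ⟨ne 0, ne 2, ne 4, ne 1, ne 3, ne 5, ne 6, r0, r2, r4, r1, r3, r5, r6⟩
  refine ⟨tubeTrace (X 0) (X 2) (X 4) 0, ?_⟩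
  rintro i (rfl | rfl | rfl) j
  · exact h.linear_relation j
  · rw [← h.tubeTrace_rotate]
    exact h.rotate.linear_relation j
  · rw [← h.tubeTrace_rotate, ← h.rotate.tubeTrace_rotate]
    exact h.rotate.rotate.linear_relation j
end

section
/- Let Q be the quiver of type Ẽ_7 with vertex set {1,…,8} and arrows 1→2, 2→3, 3→8, 4→5, 5→6, 6→8, 7→8. Then there exists an element Y of ℚ(x_1,…,x_8) such that for every extending vertex i ∈ {1, 4} and every j ≥ 0 one has Y·X^i_{j+12} = X^i_j + X^i_{j+24}. -/
/-- Arrow multiplicities of the quiver of type Ẽ_7 with arrows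
`1→2, 2→3, 3→8, 4→5, 5→6, 6→8, 7→8`; the vertex labelled `k ∈ {1,…,8}` corresponds to
the index `k−1` of `Fin 8`. -/
def multE7 (s t : Fin 8) : ℕ :=
  if (s = 0 ∧ t = 1) ∨ (s = 1 ∧ t = 2) ∨ (s = 2 ∧ t = 7) ∨ (s = 3 ∧ t = 4) ∨
     (s = 4 ∧ t = 5) ∨ (s = 5 ∧ t = 7) ∨ (s = 6 ∧ t = 7) then 1 else 0

/-- The frieze recursion of the quiver `1→2, 2→3, 3→8, 4→5, 5→6, 6→8, 7→8`, for nowhere vanishing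
sequences `a, b, c, d, e, f, g, h` attached to the vertices `1, …, 8`. -/
structure IsFriezeE7 {F : Type*} [Field F] (a b c d e f g h : ℕ → F) : Prop where
  ha : ∀ j, a (j + 1) * a j = 1 + b j
  hb : ∀ j, b (j + 1) * b j = 1 + a (j + 1) * c j
  hc : ∀ j, c (j + 1) * c j = 1 + b (j + 1) * h j
  hd : ∀ j, d (j + 1) * d j = 1 + e j
  he : ∀ j, e (j + 1) * e j = 1 + d (j + 1) * f j
  hf : ∀ j, f (j + 1) * f j = 1 + e (j + 1) * h j
  hg : ∀ j, g (j + 1) * g j = 1 + h j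
  hh : ∀ j, h (j + 1) * h j = 1 + c (j + 1) * f (j + 1) * g (j + 1)
  a_ne : ∀ j, a j ≠ 0
  b_ne : ∀ j, b j ≠ 0
  c_ne : ∀ j, c j ≠ 0
  d_ne : ∀ j, d j ≠ 0
  e_ne : ∀ j, e j ≠ 0
  f_ne : ∀ j, f j ≠ 0
  g_ne : ∀ j, g j ≠ 0
  h_ne : ∀ j, h j ≠ 0

namespace IsFriezeE7

variable {F : Type*} [Field F] {a b c d e f g h : ℕ → F}

/-- The symmetry exchanging the two long arms. -/
theorem swap (H : IsFriezeE7 a b c d e f g h) : IsFriezeE7 d e f a b c g h where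
  ha := H.hd
  hb := H.he
  hc := H.hf
  hd := H.ha
  he := H.hb
  hf := H.hc
  hg := H.hg
  hh j := by rw [H.hh]; ring
  a_ne := H.d_ne
  b_ne := H.e_ne
  c_ne := H.f_ne
  d_ne := H.a_ne
  e_ne := H.b_ne
  f_ne := H.c_ne
  g_ne := H.g_ne
  h_ne := H.h_ne

theorem c_right (H : IsFriezeE7 a b c d e f g h) (j : ℕ) :
    c j = a (j + 2) * b j - a j := by
  apply mul_left_cancel₀ (H.a_ne (j + 1))
  linear_combination -H.hb j - b j * H.ha (j + 1) + H.ha j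

theorem c_left (H : IsFriezeE7 a b c d e f g h) (j : ℕ) :
    c j = a j * b (j + 1) - a (j + 2) := by
  linear_combination H.c_right j + a j * H.ha (j + 1) - a (j + 2) * H.ha j

theorem h_right (H : IsFriezeE7 a b c d e f g h) (j : ℕ) :
    h j = a (j + 3) * c j - b j := by
  apply mul_left_cancel₀ (H.b_ne (j + 1))
  linear_combination -H.hc j + c j * H.c_right (j + 1) + H.hb j

theorem h_left (H : IsFriezeE7 a b c d e f g h) (j : ℕ) :
    h j = a j * c (j + 1) - b (j + 2) := by
  apply mul_left_cancel₀ (H.b_ne (j + 1))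
  linear_combination -H.hc j + c (j + 1) * H.c_left j + H.hb (j + 1)

theorem fg_right (H : IsFriezeE7 a b c d e f g h) (j : ℕ) :
    f (j + 1) * g (j + 1) = a (j + 4) * h j - c j := by
  apply mul_left_cancel₀ (H.c_ne (j + 1))
  linear_combination -H.hh j + h j * H.h_right (j + 1) + H.hc j

theorem fg_left (H : IsFriezeE7 a b c d e f g h) (j : ℕ) :
    f (j + 1) * g (j + 1) = a j * h (j + 1) - c (j + 2) := by
  apply mul_left_cancel₀ (H.c_ne (j + 1))
  linear_combination -H.hh j + h (j + 1) * H.h_left j + H.hc (j + 1)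

theorem cf_left (H : IsFriezeE7 a b c d e f g h) (j : ℕ) :
    c (j + 1) * f (j + 1) = g j * h (j + 1) - g (j + 2) := by
  apply mul_left_cancel₀ (H.g_ne (j + 1))
  linear_combination -H.hh j - h (j + 1) * H.hg j + H.hg (j + 1)

theorem cf_right (H : IsFriezeE7 a b c d e f g h) (j : ℕ) :
    c (j + 1) * f (j + 1) = g (j + 2) * h j - g j := by
  apply mul_left_cancel₀ (H.g_ne (j + 1))
  linear_combination -H.hh j - h j * H.hg (j + 1) + H.hg j

theorem b_mul_c (H : IsFriezeE7 a b c d e f g h) (j : ℕ) :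
    b j * c (j + 1) = a (j + 1) * h j + a (j + 3) := by
  linear_combination b j * H.c_right (j + 1) - a (j + 1) * H.h_right j + a (j + 3) * H.hb j

theorem c_mul_b (H : IsFriezeE7 a b c d e f g h) (j : ℕ) :
    c j * b (j + 2) = a (j + 2) * h j + a j := by
  linear_combination b (j + 2) * H.c_left j - a (j + 2) * H.h_left j + a j * H.hb (j + 1)

theorem h_mul_d (H : IsFriezeE7 a b c d e f g h) (j : ℕ) :
    h (j + 2) * d j = a (j + 5) * g (j + 3) + f (j + 2) * b (j + 2) := by
  apply mul_left_cancel₀ (H.h_ne (j + 1))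
  linear_combination -h (j + 2) * H.swap.fg_left j + g (j + 3) * H.fg_right (j + 1) +
    f (j + 2) * H.hc (j + 1) - f (j + 2) * H.hg (j + 2) - c (j + 1) * H.cf_left (j + 1)

theorem h_mul_a (H : IsFriezeE7 a b c d e f g h) (j : ℕ) :
    h j * a (j + 5) = d j * g j + c (j + 1) * e (j + 2) := by
  apply mul_left_cancel₀ (H.h_ne (j + 1))
  linear_combination -h j * H.fg_right (j + 1) + g j * H.swap.fg_left j +
    c (j + 1) * H.hf (j + 1) - c (j + 1) * H.hg j - f (j + 2) * H.cf_right j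

theorem c_mul_d (H : IsFriezeE7 a b c d e f g h) (j : ℕ) :
    c (j + 3) * d j = a (j + 5) * d (j + 6) + a (j + 3) * f (j + 2) := by
  apply mul_left_cancel₀ (H.h_ne (j + 2))
  linear_combination c (j + 3) * H.h_mul_d j + a (j + 5) * H.swap.fg_right (j + 2) +
    f (j + 2) * H.b_mul_c (j + 2)

theorem f_mul_a (H : IsFriezeE7 a b c d e f g h) (j : ℕ) :
    f (j + 3) * a (j + 8) = d (j + 3) * a (j + 2) + d (j + 5) * c (j + 4) := by
  apply mul_left_cancel₀ (H.h_ne (j + 3))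
  linear_combination f (j + 3) * H.h_mul_a (j + 3) + d (j + 3) * H.fg_left (j + 2) +
    c (j + 4) * H.swap.c_mul_b (j + 3)

/-- The two expressions for a quasi-simple element of the tube of rank `4` agree. -/
theorem tube_relation (H : IsFriezeE7 a b c d e f g h) (j : ℕ) :
    d (j + 5) * (d (j + 6) + d j) = a (j + 3) * (a (j + 8) + a (j + 2)) := by
  have h₁ : c (j + 3) * (d (j + 6) + d j) = a (j + 3) * (b (j + 4) * d (j + 6) + f (j + 2)) := by
    linear_combination H.c_mul_d j + d (j + 6) * H.c_left (j + 3)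
  have h₂ : f (j + 3) * (a (j + 8) + a (j + 2)) =
      d (j + 5) * (e (j + 3) * a (j + 2) + c (j + 4)) := by
    linear_combination H.f_mul_a j + a (j + 2) * H.swap.c_right (j + 3)
  have h₃ : (b (j + 4) * d (j + 6) + f (j + 2)) * f (j + 3) =
      (e (j + 3) * a (j + 2) + c (j + 4)) * c (j + 3) := by
    linear_combination -b (j + 4) * H.swap.h_right (j + 3) + e (j + 3) * H.h_left (j + 2) +
      H.hf (j + 2) - H.hc (j + 3)
  apply mul_left_cancel₀ (mul_ne_zero (H.c_ne (j + 3)) (H.f_ne (j + 3)))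
  linear_combination d (j + 5) * f (j + 3) * h₁ - a (j + 3) * c (j + 3) * h₂ +
    d (j + 5) * a (j + 3) * h₃

/-- The quasi-simple element of the tube of rank `4` joining `d j`, `a (j + 3)`, `d (j + 6)`. -/
theorem tube_shift (H : IsFriezeE7 a b c d e f g h) (j : ℕ) :
    (d (j + 6) + d j) / a (j + 3) = (a (j + 8) + a (j + 2)) / d (j + 5) := by
  rw [div_eq_div_iff (H.a_ne _) (H.d_ne _)]
  linear_combination H.tube_relation j

theorem tube_periodic (H : IsFriezeE7 a b c d e f g h) (j : ℕ) :
    (d (j + 10) + d (j + 4)) / a (j + 7) = (d (j + 6) + d j) / a (j + 3) :=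
  (H.swap.tube_shift (j + 2)).symm.trans (H.tube_shift j).symm

theorem exists_linear_relation (H : IsFriezeE7 a b c d e f g h) :
    ∃ Y : F, ∀ j, Y * a (j + 12) = a j + a (j + 24) ∧ Y * d (j + 12) = d j + d (j + 24) := by
  obtain ⟨q, hq⟩ : ∃ q : ℕ → F, ∀ j, q j = (d (j + 6) + d j) / a (j + 3) := ⟨_, fun _ => rfl⟩
  have hper : ∀ j, q (j + 4) = q j := fun j => by
    rw [hq, hq]
    exact H.tube_periodic j
  have hd : ∀ j, q j * a (j + 3) = d (j + 6) + d j := fun j => by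
    rw [hq, div_mul_cancel₀ _ (H.a_ne _)]
  have ha : ∀ j, q (j + 2) * d (j + 3) = a (j + 6) + a j := fun j => by
    rw [hq, ← H.swap.tube_shift j, div_mul_cancel₀ _ (H.d_ne _)]
  -- `K` is the trace of the monodromy of `w (n + 1) + w (n - 1) = k n * w n`
  let K : F → F → F → F → F := fun k₀ k₁ k₂ k₃ =>
    k₀ * k₁ * k₂ * k₃ - k₀ * k₁ - k₁ * k₂ - k₂ * k₃ - k₃ * k₀ + 2
  have hK : ∀ j, K (q j) (q (j + 1)) (q (j + 2)) (q (j + 3)) =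
      K (q 0) (q 1) (q 2) (q 3) := fun j => by
    induction j with
    | zero => rfl
    | succ j ih =>
      rw [← ih, show q (j + 1 + 3) = q j from hper j]
      simp only [K, add_assoc, Nat.reduceAdd]
      ring
  have mono : ∀ {k₀ k₁ k₂ k₃ w₀ w₁ w₂ w₃ w₄ w₅ w₆ w₇ w₈ : F}, k₂ * w₁ = w₂ + w₀ →
      k₃ * w₂ = w₃ + w₁ → k₀ * w₃ = w₄ + w₂ → k₁ * w₄ = w₅ + w₃ → k₂ * w₅ = w₆ + w₄ →
      k₃ * w₆ = w₇ + w₅ → k₀ * w₇ = w₈ + w₆ → K k₀ k₁ k₂ k₃ * w₄ = w₀ + w₈ := by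
    intro k₀ k₁ k₂ k₃ w₀ w₁ w₂ w₃ w₄ w₅ w₆ w₇ w₈ h₁ h₂ h₃ h₄ h₅ h₆ h₇
    simp only [K]
    grind
  refine ⟨K (q 0) (q 1) (q 2) (q 3), fun j => ⟨?_, ?_⟩⟩
  · rw [← hK j]
    have e₀ : q (j + 8) = q j := by rw [hper (j + 4), hper]
    have e₁ : q (j + 9) = q (j + 1) := by rw [hper (j + 5), hper (j + 1)]
    have e₂ : q (j + 14) = q (j + 2) := by rw [hper (j + 10), hper (j + 6), hper (j + 2)]
    have e₃ : q (j + 15) = q (j + 3) := by rw [hper (j + 11), hper (j + 7), hper (j + 3)]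
    have e₄ : q (j + 20) = q j := by rw [hper (j + 16), hper (j + 12), hper (j + 8), e₀]
    exact mono (ha j) (hd (j + 3)) (e₀ ▸ ha (j + 6)) (e₁ ▸ hd (j + 9)) (e₂ ▸ ha (j + 12))
      (e₃ ▸ hd (j + 15)) (e₄ ▸ ha (j + 18))
  · rw [← hK (j + 2)]
    have e₁ : q (j + 2 + 2) = q j := hper j
    have e₂ : q (j + 2 + 3) = q (j + 1) := hper (j + 1)
    have e₃ : q (j + 6) = q (j + 2) := hper (j + 2)
    have e₄ : q (j + 11) = q (j + 3) := by rw [hper (j + 7), hper (j + 3)]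
    have e₅ : q (j + 12) = q j := by rw [hper (j + 8), hper (j + 4), hper]
    have e₆ : q (j + 17) = q (j + 1) := by
      rw [hper (j + 13), hper (j + 9), hper (j + 5), hper (j + 1)]
    have e₇ : q (j + 18) = q (j + 2) := by
      rw [hper (j + 14), hper (j + 10), hper (j + 6), hper (j + 2)]
    rw [e₁, e₂]
    exact mono (hd j) (e₂ ▸ ha (j + 3)) (e₃ ▸ hd (j + 6)) (e₄ ▸ ha (j + 9)) (e₅ ▸ hd (j + 12))
      (e₆ ▸ ha (j + 15)) (e₇ ▸ hd (j + 18))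

end IsFriezeE7

/-- A rational function is `PosAtOne` if it is a quotient of two polynomials that are both
positive at the point `(1, …, 1)`. -/
def PosAtOne {σ : Type*} (z : FractionRing (MvPolynomial σ ℚ)) : Prop :=
  ∃ p q : MvPolynomial σ ℚ, 0 < MvPolynomial.eval 1 p ∧ 0 < MvPolynomial.eval 1 q ∧
    z * algebraMap _ (FractionRing (MvPolynomial σ ℚ)) q = algebraMap _ _ p

namespace PosAtOne

variable {σ : Type*} {y z : FractionRing (MvPolynomial σ ℚ)}

theorem algebraMap_ne_zero {p : MvPolynomial σ ℚ} (hp : 0 < MvPolynomial.eval 1 p) :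
    algebraMap _ (FractionRing (MvPolynomial σ ℚ)) p ≠ 0 := by
  rw [Ne, FaithfulSMul.algebraMap_eq_zero_iff]
  rintro rfl
  simp at hp

theorem ne_zero (hz : PosAtOne z) : z ≠ 0 := by
  rintro rfl
  obtain ⟨p, q, hp, -, h⟩ := hz
  rw [zero_mul] at h
  exact algebraMap_ne_zero hp h.symm

theorem algebraMap_X (v : σ) :
    PosAtOne (algebraMap (MvPolynomial σ ℚ) (FractionRing (MvPolynomial σ ℚ)) (MvPolynomial.X v)) :=
  ⟨MvPolynomial.X v, 1, by simp, by simp, by simp⟩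

theorem mul (hy : PosAtOne y) (hz : PosAtOne z) : PosAtOne (y * z) := by
  obtain ⟨p, q, hp, hq, h⟩ := hy
  obtain ⟨p', q', hp', hq', h'⟩ := hz
  refine ⟨p * p', q * q', by simpa using mul_pos hp hp', by simpa using mul_pos hq hq', ?_⟩
  rw [map_mul, map_mul, ← h, ← h']
  ring

theorem one_add (hz : PosAtOne z) : PosAtOne (1 + z) := by
  obtain ⟨p, q, hp, hq, h⟩ := hz
  refine ⟨q + p, q, by simpa using add_pos hq hp, hq, ?_⟩
  rw [map_add, ← h]
  ring

theorem of_mul_right (hz : PosAtOne z) (hyz : PosAtOne (y * z)) : PosAtOne y := by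
  obtain ⟨p, q, hp, hq, h⟩ := hz
  obtain ⟨p', q', hp', hq', h'⟩ := hyz
  refine ⟨p' * q, q' * p, by simpa using mul_pos hp' hq, by simpa using mul_pos hq' hp, ?_⟩
  rw [map_mul, map_mul, ← h, ← h']
  ring

end PosAtOne

/-- for the above quiver of type Ẽ_7, there is an element `Y` of
`ℚ(x_1,…,x_8)` such that for every extending vertex `i ∈ {1,4}` (indices `{0,3}` of
`Fin 8`) and every `j ≥ 0` one has `Y·X^i_{j+12} = X^i_j + X^i_{j+24}`. -/
theorem stmt_17
    (X : Fin 8 → ℕ → FractionRing (MvPolynomial (Fin 8) ℚ))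
    (hX0 : ∀ v, X v 0 = algebraMap (MvPolynomial (Fin 8) ℚ)
      (FractionRing (MvPolynomial (Fin 8) ℚ)) (MvPolynomial.X v))
    (hXrec : ∀ v (j : ℕ), X v (j+1) * X v j =
      1 + (∏ s : Fin 8, X s (j+1) ^ multE7 s v) * (∏ d : Fin 8, X d j ^ multE7 v d)) :
    ∃ Y : FractionRing (MvPolynomial (Fin 8) ℚ),
      ∀ i : Fin 8, (i = 0 ∨ i = 3) →
        ∀ j : ℕ, Y * X i (j + 12) = X i j + X i (j + 24) := by
  have r0 : ∀ j, X 0 (j + 1) * X 0 j = 1 + X 1 j := fun j => by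
    simpa [multE7, Fin.prod_univ_eight] using hXrec 0 j
  have r1 : ∀ j, X 1 (j + 1) * X 1 j = 1 + X 0 (j + 1) * X 2 j := fun j => by
    simpa [multE7, Fin.prod_univ_eight] using hXrec 1 j
  have r2 : ∀ j, X 2 (j + 1) * X 2 j = 1 + X 1 (j + 1) * X 7 j := fun j => by
    simpa [multE7, Fin.prod_univ_eight] using hXrec 2 j
  have r3 : ∀ j, X 3 (j + 1) * X 3 j = 1 + X 4 j := fun j => by
    simpa [multE7, Fin.prod_univ_eight] using hXrec 3 j
  have r4 : ∀ j, X 4 (j + 1) * X 4 j = 1 + X 3 (j + 1) * X 5 j := fun j => by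
    simpa [multE7, Fin.prod_univ_eight] using hXrec 4 j
  have r5 : ∀ j, X 5 (j + 1) * X 5 j = 1 + X 4 (j + 1) * X 7 j := fun j => by
    simpa [multE7, Fin.prod_univ_eight] using hXrec 5 j
  have r6 : ∀ j, X 6 (j + 1) * X 6 j = 1 + X 7 j := fun j => by
    simpa [multE7, Fin.prod_univ_eight] using hXrec 6 j
  have r7 : ∀ j, X 7 (j + 1) * X 7 j = 1 + X 2 (j + 1) * X 5 (j + 1) * X 6 (j + 1) := fun j => by
    simpa [multE7, Fin.prod_univ_eight] using hXrec 7 j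
  have pos : ∀ j v, PosAtOne (X v j) := fun j => by
    induction j with
    | zero => exact fun v => hX0 v ▸ PosAtOne.algebraMap_X v
    | succ j ih =>
      have p0 := (ih 0).of_mul_right (r0 j ▸ (ih 1).one_add)
      have p1 := (ih 1).of_mul_right (r1 j ▸ (p0.mul (ih 2)).one_add)
      have p2 := (ih 2).of_mul_right (r2 j ▸ (p1.mul (ih 7)).one_add)
      have p3 := (ih 3).of_mul_right (r3 j ▸ (ih 4).one_add)
      have p4 := (ih 4).of_mul_right (r4 j ▸ (p3.mul (ih 5)).one_add)
      have p5 := (ih 5).of_mul_right (r5 j ▸ (p4.mul (ih 7)).one_add)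
      have p6 := (ih 6).of_mul_right (r6 j ▸ (ih 7).one_add)
      have p7 := (ih 7).of_mul_right (r7 j ▸ ((p2.mul p5).mul p6).one_add)
      intro v
      fin_cases v <;> assumption
  have ne : ∀ v j, X v j ≠ 0 := fun v j => (pos j v).ne_zero
  have H : IsFriezeE7 (X 0) (X 1) (X 2) (X 3) (X 4) (X 5) (X 6) (X 7) :=
    ⟨r0, r1, r2, r3, r4, r5, r6, r7, ne 0, ne 1, ne 2, ne 3, ne 4, ne 5, ne 6, ne 7⟩
  obtain ⟨Y, hY⟩ := H.exists_linear_relation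
  refine ⟨Y, ?_⟩
  rintro i (rfl | rfl) j
  exacts [(hY j).1, (hY j).2]
end
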